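/- Let S = {1324, 1342, 2413, 2431, 3124, 3142, 4213, 4231}. For every permuton μ it holds that Σ_{π∈S} d(π,μ) ≤ 1/3, and equality holds if and only if μ is the uniform permuton. -/

import Mathlib

open MeasureTheory Filter

noncomputable section

/-- A permuton: a Borel probability measure on `ℝ × ℝ` (supported on `[0,1]²`)
with uniform marginals. -/
def IsPermuton (μ : Measure (ℝ × ℝ)) : Prop :=
  IsProbabilityMeasure μ ∧
    (∀ x x' : ℝ, 0 ≤ x → x ≤ x' → x' ≤ 1 →
      μ (Set.Icc x x' ×ˢ Set.Icc (0 : ℝ) 1) = ENNReal.ofReal (x' - x)) ∧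
    (∀ y y' : ℝ, 0 ≤ y → y ≤ y' → y' ≤ 1 →
      μ (Set.Icc (0 : ℝ) 1 ×ˢ Set.Icc y y') = ENNReal.ofReal (y' - y))

/-- The uniform permuton: two-dimensional Lebesgue measure on `[0,1]²`. -/
def uniformPermuton : Measure (ℝ × ℝ) :=
  volume.restrict (Set.Icc (0 : ℝ) 1 ×ˢ Set.Icc (0 : ℝ) 1)

/-- The support of a Borel measure: all points each of whose open neighbourhoods has
positive measure. -/
def measSupport (μ : Measure (ℝ × ℝ)) : Set (ℝ × ℝ) :=
  {p | ∀ U : Set (ℝ × ℝ), IsOpen U → p ∈ U → 0 < μ U}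

/-- The pattern density of a `k`-permutation `π` in a measure `μ` on `ℝ × ℝ`:
the `μ^{⊗ k}`-probability that `k` sampled points, relabelled so that their
`x`-coordinates increase, have `y`-coordinates ordered according to `π`. -/
def PermutonDensity {k : ℕ} (π : Equiv.Perm (Fin k)) (μ : Measure (ℝ × ℝ)) : ℝ :=
  ((Measure.pi fun _ : Fin k => μ)
    {p : Fin k → ℝ × ℝ | ∃ σ : Equiv.Perm (Fin k),
      StrictMono (fun i => (p (σ i)).1) ∧
        ∀ i j : Fin k, (p (σ i)).2 < (p (σ j)).2 ↔ π i < π j}).toReal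

open scoped Classical in
/-- The pattern density of a `k`-permutation `π` in an `n`-permutation `Π`:
the proportion of `k`-element subsets of `Fin n` on which `Π` induces the pattern `π`
(zero when `n < k`). -/
def PatternDensity {k n : ℕ} (π : Equiv.Perm (Fin k)) (Perm : Equiv.Perm (Fin n)) : ℝ :=
  ((Finset.univ.filter fun A : Finset (Fin n) =>
      ∃ h : A.card = k, ∀ i j : Fin k,
        Perm ↑(A.orderIsoOfFin h i) < Perm ↑(A.orderIsoOfFin h j) ↔ π i < π j).card : ℝ) /
    (n.choose k)

/-- A sequence of permutations (of varying orders) is quasirandom if the density of every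
pattern `π` converges to `1/|π|!`. -/
def Quasirandom (P : ℕ → (n : ℕ) × Equiv.Perm (Fin n)) : Prop :=
  ∀ (k : ℕ) (π : Equiv.Perm (Fin k)),
    Tendsto (fun i => PatternDensity π (P i).2) atTop (nhds (1 / (Nat.factorial k : ℝ)))

/-- A set `S` of `k`-permutations is `Σ`-forcing if a sequence of permutations is quasirandom
exactly when the sum of the densities of the patterns from `S` converges to `|S|/k!`. -/
def SigmaForcing {k : ℕ} (S : Finset (Equiv.Perm (Fin k))) : Prop :=
  ∀ P : ℕ → (n : ℕ) × Equiv.Perm (Fin n),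
    Quasirandom P ↔
      Tendsto (fun i => ∑ π ∈ S, PatternDensity π (P i).2) atTop
        (nhds ((S.card : ℝ) / (Nat.factorial k : ℝ)))

/-- The `4`-permutation written in one-line notation as `(a+1)(b+1)(c+1)(d+1)`
(inputs are 0-indexed). -/
def mk4 (a b c d : Fin 4) (h : Function.Bijective ![a, b, c, d] := by decide) :
    Equiv.Perm (Fin 4) :=
  Equiv.ofBijective _ h

/-- A doubly stochastic matrix: non-negative entries, all row and column sums equal to one. -/
def IsDoublyStochastic {n : ℕ} (A : Matrix (Fin n) (Fin n) ℝ) : Prop :=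
  (∀ i j, 0 ≤ A i j) ∧ (∀ i, ∑ j, A i j = 1) ∧ (∀ j, ∑ i, A i j = 1)

/-- The step permuton `μ[A]` associated with an `n × n` doubly stochastic matrix `A`. -/
def stepPermuton {n : ℕ} (A : Matrix (Fin n) (Fin n) ℝ) : Measure (ℝ × ℝ) :=
  ∑ i : Fin n, ∑ j : Fin n,
    ENNReal.ofReal (A i j * n) •
      volume.restrict
        (Set.Ico ((i : ℝ) / n) (((i : ℝ) + 1) / n) ×ˢ
          Set.Ico ((j : ℝ) / n) (((j : ℝ) + 1) / n))

/-- The matrix `B^{ij}` (0-indexed: `p, q ∈ [n-1]`): `+1` at positions `(p,q)` and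
`(p+1,q+1)`, `-1` at positions `(p,q+1)` and `(p+1,q)`, `0` elsewhere. -/
def Bmat (n : ℕ) (p q : Fin (n - 1)) : Matrix (Fin n) (Fin n) ℝ := fun a b =>
  (if (a : ℕ) = (p : ℕ) ∧ (b : ℕ) = (q : ℕ) then 1 else 0) +
    (if (a : ℕ) = (p : ℕ) + 1 ∧ (b : ℕ) = (q : ℕ) + 1 then 1 else 0) -
    (if (a : ℕ) = (p : ℕ) ∧ (b : ℕ) = (q : ℕ) + 1 then 1 else 0) -
    (if (a : ℕ) = (p : ℕ) + 1 ∧ (b : ℕ) = (q : ℕ) then 1 else 0)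

/-- The matrix `A + ∑_{i,j} x_{ij} B^{ij}` where `A` is the `n × n` matrix with all
entries `1/n`. -/
def pertMatrix (n : ℕ) (x : Fin (n - 1) × Fin (n - 1) → ℝ) : Matrix (Fin n) (Fin n) ℝ :=
  fun a b => 1 / n + ∑ p : Fin (n - 1) × Fin (n - 1), x p * Bmat n p.1 p.2 a b

/-- The function `h_{S,n}`: the sum over `π ∈ S` of the pattern density of `π` in the
step permuton of the perturbed matrix. -/
def hSN (n : ℕ) (S : Finset (Equiv.Perm (Fin 4))) (x : Fin (n - 1) × Fin (n - 1) → ℝ) : ℝ :=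
  ∑ π ∈ S, PermutonDensity π (stepPermuton (pertMatrix n x))

open scoped Classical in
/-- The cover matrix of a set `S` of `4`-permutations: `C i j` is the number of `π ∈ S`
with `π j = i`. -/
def coverMatrix (S : Finset (Equiv.Perm (Fin 4))) : Fin 4 → Fin 4 → ℕ := fun i j =>
  (S.filter fun π => π j = i).card

/-- The eight symmetry operations on `4`-permutations. -/
def symOps : List (Equiv.Perm (Fin 4) → Equiv.Perm (Fin 4)) :=
  [fun σ => σ,
   fun σ => σ * Fin.revPerm,
   fun σ => Fin.revPerm * σ,
   fun σ => Fin.revPerm * σ * Fin.revPerm,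
   fun σ => σ⁻¹,
   fun σ => σ⁻¹ * Fin.revPerm,
   fun σ => Fin.revPerm * σ⁻¹,
   fun σ => Fin.revPerm * σ⁻¹ * Fin.revPerm]

open scoped Classical in
/-- `T` is symmetric to `S` if one of the eight symmetry operations maps `S` onto `T`. -/
def SymmetricSets (S T : Finset (Equiv.Perm (Fin 4))) : Prop :=
  ∃ op ∈ symOps, T = S.image op

end

/-
The eight patterns are those in which the first two values interlace with the last two. Draw four
points and let `R` be the event that the third lies to the right of the first two and that the
heights of the first two interlace with those of the last two. Of the 24 labellings of four points
exactly four lie in `R` if their pattern is one of the eight, and exactly two otherwise, so the sum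
of the eight densities is `12 P(R) - 1`. Given the first three points, of heights `a`, `b`, `c`, the
probability that a uniform height completes the interlacing is `|s c a - s c b| / 2`, where `s` is
the sawtooth on the circle `ℝ / ℤ`; this is a quadratic polynomial in `s c a`, `s c b` and `s a b`.
Averaging over which of the three points is the rightmost evaluates the squares, and the products
integrate to squares of `J (x, u) = ∫ p in {p | p.1 < x}, s u p.2 ∂μ`. The sum of the densities is
therefore `1 / 3 - 12 * ∫ J ^ 2 ∂uniformPermuton - 6 * ∫ J ^ 2 ∂μ`. As `J` is continuous and
determines the masses of the boxes `[0, t) × [0, u]`, equality forces `μ` to be uniform.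
-/

section

open Set

section Patterns

/-- The points `p` form the pattern `π` once sorted by first coordinate. `PermutonDensity π μ` is
the probability of this event for independent `μ`-distributed points. -/
def HasPattern {k : ℕ} (π : Equiv.Perm (Fin k)) (p : Fin k → ℝ × ℝ) : Prop :=
  ∃ σ : Equiv.Perm (Fin k), StrictMono (fun i => (p (σ i)).1) ∧
    ∀ i j : Fin k, (p (σ i)).2 < (p (σ j)).2 ↔ π i < π j

variable {k : ℕ} {π ρ : Equiv.Perm (Fin k)} {p : Fin k → ℝ × ℝ}

lemma perm_eq_of_strictMono_comp {α : Type*} [LinearOrder α] {f : Fin k → α}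
    {σ τ : Equiv.Perm (Fin k)} (hσ : StrictMono (f ∘ σ)) (hτ : StrictMono (f ∘ τ)) : σ = τ := by
  have hf : Function.Injective f := (Equiv.injective_comp σ f).mp hσ.injective
  ext1 i
  exact hf (congrFun (Tuple.unique_monotone hσ.monotone hτ.monotone) i)

lemma strictMono_comp_sort {α : Type*} [LinearOrder α] {f : Fin k → α}
    (hf : Function.Injective f) : StrictMono (f ∘ Tuple.sort f) :=
  (Tuple.monotone_sort f).strictMono_of_injective (hf.comp (Tuple.sort f).injective)

lemma HasPattern.unique (hπ : HasPattern π p) (hρ : HasPattern ρ p) : π = ρ := by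
  obtain ⟨σ, hσ, hσπ⟩ := hπ
  obtain ⟨τ, hτ, hτρ⟩ := hρ
  obtain rfl : σ = τ := perm_eq_of_strictMono_comp (f := Prod.fst ∘ p) hσ hτ
  have hπρ : ∀ i j, π i < π j ↔ ρ i < ρ j := fun i j => (hσπ i j).symm.trans (hτρ i j)
  have hπ' : StrictMono (π ∘ ⇑π⁻¹) := fun i j hij => by simpa using hij
  have hρ' : StrictMono (π ∘ ⇑ρ⁻¹) := fun i j hij => (hπρ _ _).mpr (by simpa using hij)
  exact inv_injective (perm_eq_of_strictMono_comp hπ' hρ')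

lemma exists_hasPattern (hx : Function.Injective fun i => (p i).1)
    (hy : Function.Injective fun i => (p i).2) : ∃ π, HasPattern π p := by
  set σ := Tuple.sort fun i => (p i).1
  set τ := Tuple.sort fun i => (p (σ i)).2
  have hτ : StrictMono ((fun i => (p (σ i)).2) ∘ τ) :=
    strictMono_comp_sort (hy.comp σ.injective)
  refine ⟨τ⁻¹, σ, strictMono_comp_sort hx, fun i j => ?_⟩
  simpa using hτ.lt_iff_lt (a := τ⁻¹ i) (b := τ⁻¹ j)

lemma measurableSet_hasPattern (π : Equiv.Perm (Fin k)) : MeasurableSet {p | HasPattern π p} := by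
  simp only [HasPattern, StrictMono]
  measurability

theorem sum_permutonDensity (S : Finset (Equiv.Perm (Fin k))) (μ : Measure (ℝ × ℝ))
    [IsFiniteMeasure μ] :
    ∑ π ∈ S, PermutonDensity π μ =
      (Measure.pi fun _ : Fin k => μ).real (⋃ π ∈ S, {p | HasPattern π p}) := by
  have hdisj : (S : Set (Equiv.Perm (Fin k))).PairwiseDisjoint fun π => {p | HasPattern π p} :=
    fun π _ ρ _ hne => disjoint_left.mpr fun p hπ hρ => hne (hπ.unique hρ)
  rw [measureReal_biUnion_finset hdisj fun π _ => measurableSet_hasPattern π]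
  rfl

end Patterns

section Interlacing

/-- The pairs `{a, b}` and `{c, d}` interlace: exactly one of `c` and `d` lies strictly between
`a` and `b`. -/
def Interlace {α : Type*} [LT α] (a b c d : α) : Prop :=
  Xor (a < c ∧ c < b ∨ b < c ∧ c < a) (a < d ∧ d < b ∨ b < d ∧ d < a)

instance {α : Type*} [LinearOrder α] (a b c d : α) : Decidable (Interlace a b c d) := by
  unfold Interlace
  infer_instance

lemma eq_filter_interlace :
    ({mk4 0 2 1 3, mk4 0 2 3 1, mk4 1 3 0 2, mk4 1 3 2 0,
      mk4 2 0 1 3, mk4 2 0 3 1, mk4 3 1 0 2, mk4 3 1 2 0} : Finset (Equiv.Perm (Fin 4))) =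
    Finset.univ.filter fun π => Interlace (π 0) (π 1) (π 2) (π 3) := by
  decide +kernel

lemma card_rightmost_interlace (π : Equiv.Perm (Fin 4)) :
    Finset.card {σ : Equiv.Perm (Fin 4) | σ 0 < σ 2 ∧ σ 1 < σ 2 ∧
      Interlace (π (σ 0)) (π (σ 1)) (π (σ 2)) (π (σ 3))} =
    if Interlace (π 0) (π 1) (π 2) (π 3) then 4 else 2 := by
  revert π
  decide +kernel

end Interlacing

section Sampling

variable {X : Type*} {ι : Type*} {g : X → ℝ}

/-- The samples whose value of `g` is strictly largest at index `i`. For `g = Prod.fst` and planar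
samples, the point with index `i` is the rightmost one. -/
def maxAt (g : X → ℝ) (i : ι) : Set (ι → X) := {q | ∀ j ≠ i, g (q j) < g (q i)}

lemma maxAt_disjoint {i j : ι} (hij : i ≠ j) : Disjoint (maxAt g i) (maxAt g j) :=
  disjoint_left.mpr fun _ hi hj => (hi j hij.symm).asymm (hj i hij)

lemma exists_mem_maxAt [Finite ι] [Nonempty ι] {q : ι → X} (hq : Function.Injective (g ∘ q)) :
    ∃ i, q ∈ maxAt g i := by
  obtain ⟨i, hi⟩ := Finite.exists_max (g ∘ q)
  exact ⟨i, fun j hj => (hi j).lt_of_ne (hq.ne hj)⟩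

lemma preimage_comp_perm_maxAt (σ : Equiv.Perm ι) (i : ι) :
    (fun q : ι → X => q ∘ σ) ⁻¹' maxAt g i = maxAt g (σ i) := by
  ext q
  refine ⟨fun h j hj => ?_, fun h j hj => h (σ j) (σ.injective.ne hj)⟩
  simpa using h (σ⁻¹ j) (by rwa [Ne, Equiv.Perm.inv_eq_iff_eq])

lemma indicator_maxAt_last {n : ℕ} (φ : X → X → ℝ) (q : Fin (n + 1) → X) :
    (maxAt g (Fin.last n)).indicator
      (fun q => ∏ j : Fin n, φ (q (Fin.last n)) (q j.castSucc)) q =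
    ∏ j : Fin n, {a | g a < g (q (Fin.last n))}.indicator (φ (q (Fin.last n))) (q j.castSucc) := by
  by_cases hq : ∀ j : Fin n, g (q j.castSucc) < g (q (Fin.last n))
  · have hmem : q ∈ maxAt g (Fin.last n) := by
      simpa [maxAt, Fin.forall_fin_succ'] using hq
    rw [indicator_of_mem hmem]
    exact Finset.prod_congr rfl fun j _ =>
      (indicator_of_mem (s := {a | g a < g (q (Fin.last n))}) (hq j) _).symm
  · have hmem : q ∉ maxAt g (Fin.last n) := fun h => hq fun j => h _ j.castSucc_lt_last.ne
    obtain ⟨j, hj⟩ := not_forall.mp hq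
    rw [indicator_of_notMem hmem, Finset.prod_eq_zero (Finset.mem_univ j)]
    exact indicator_of_notMem (s := {a | g a < g (q (Fin.last n))}) hj _

variable [MeasurableSpace X]

lemma measurableSet_maxAt [Finite ι] (hg : Measurable g) (i : ι) :
    MeasurableSet (maxAt g i) := by
  unfold maxAt
  measurability

lemma ae_prod_fst_ne_snd (m : Measure X) [SFinite m] [MeasurableEq X] [NullSingletonClass m] :
    ∀ᵐ z ∂m.prod m, z.1 ≠ z.2 := by
  have hmeas : MeasurableSet {z : X × X | z.1 = z.2} :=
    measurableSet_eq_fun measurable_fst measurable_snd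
  have hnull : (m.prod m) {z : X × X | z.1 = z.2} = 0 :=
    (Measure.measure_prod_null hmeas).mpr <| .of_forall fun x => by
      simp only [preimage_ofPred_eq, eq_comm (a := x), Pi.zero_apply]
      exact measure_singleton x
  simpa only [ae_iff, not_not, ne_eq] using hnull

section SigmaFinite

variable (m : Measure X) [SigmaFinite m] [Fintype ι]

lemma measurePreserving_comp_perm (σ : Equiv.Perm ι) :
    MeasurePreserving (MeasurableEquiv.arrowCongr' σ⁻¹ (.refl X))
      (Measure.pi fun _ : ι => m) (Measure.pi fun _ : ι => m) :=
  measurePreserving_arrowCongr' (fun _ => m) (fun _ => m) σ⁻¹ (.refl X) fun _ => .id m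

lemma integral_pi_comp_perm (σ : Equiv.Perm ι) (f : (ι → X) → ℝ) :
    ∫ p, f (p ∘ σ) ∂Measure.pi (fun _ : ι => m) = ∫ p, f p ∂Measure.pi (fun _ : ι => m) :=
  (measurePreserving_comp_perm m σ).integral_comp' f

lemma integral_sum_comp_perm [DecidableEq ι] {f : (ι → X) → ℝ}
    (hf : Integrable f (Measure.pi fun _ : ι => m)) :
    ∫ p, ∑ σ : Equiv.Perm ι, f (p ∘ σ) ∂Measure.pi (fun _ : ι => m) =
      (Fintype.card ι).factorial * ∫ p, f p ∂Measure.pi (fun _ : ι => m) := by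
  have hint : ∀ σ : Equiv.Perm ι,
      Integrable (fun p => f (p ∘ σ)) (Measure.pi fun _ : ι => m) := fun σ =>
    (measurePreserving_comp_perm m σ).integrable_comp_of_integrable hf
  rw [integral_finsetSum _ fun σ _ => hint σ]
  simp only [integral_pi_comp_perm, Finset.sum_const, Finset.card_univ, Fintype.card_perm,
    nsmul_eq_mul]

lemma integral_pi_eq_integral_prod {n : ℕ} (i : Fin (n + 1)) (f : (Fin (n + 1) → X) → ℝ) :
    ∫ p, f p ∂Measure.pi (fun _ : Fin (n + 1) => m) =
      ∫ z, f (i.insertNth z.1 z.2) ∂m.prod (Measure.pi fun _ : Fin n => m) :=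
  ((measurePreserving_piFinSuccAbove (fun _ : Fin (n + 1) => m) i).symm.integral_comp' f).symm

lemma integrable_prod_insertNth {n : ℕ} (i : Fin (n + 1)) {f : (Fin (n + 1) → X) → ℝ}
    (hf : Integrable f (Measure.pi fun _ : Fin (n + 1) => m)) :
    Integrable (fun z : X × (Fin n → X) => f (i.insertNth z.1 z.2))
      (m.prod (Measure.pi fun _ : Fin n => m)) :=
  (measurePreserving_piFinSuccAbove (fun _ : Fin (n + 1) => m) i).symm.integrable_comp_of_integrable
    hf

lemma integral_prod_castSucc {n : ℕ} {φ : X → X → ℝ}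
    (hφ : Integrable (fun q : Fin (n + 1) → X => ∏ j : Fin n, φ (q (Fin.last n)) (q j.castSucc))
      (Measure.pi fun _ : Fin (n + 1) => m)) :
    ∫ q, ∏ j : Fin n, φ (q (Fin.last n)) (q j.castSucc) ∂Measure.pi (fun _ : Fin (n + 1) => m) =
      ∫ c, (∫ a, φ c a ∂m) ^ n ∂m := by
  rw [integral_pi_eq_integral_prod m (Fin.last n),
    integral_prod _ (integrable_prod_insertNth m (Fin.last n) hφ)]
  simp only [← Fin.succAbove_last, Fin.insertNth_apply_same, Fin.insertNth_apply_succAbove,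
    integral_fintype_prod_eq_pow, Fintype.card_fin]

theorem integral_eq_sum_setIntegral_maxAt [DecidableEq ι] (hg : Measurable g)
    (hinj : ∀ᵐ q ∂Measure.pi (fun _ : ι => m), Function.Injective (g ∘ q))
    {f : (ι → X) → ℝ} (hf : Integrable f (Measure.pi fun _ : ι => m)) (i₀ : ι) :
    ∫ q, f q ∂Measure.pi (fun _ : ι => m) =
      ∑ i, ∫ q in maxAt g i₀, f (q ∘ Equiv.swap i i₀) ∂Measure.pi (fun _ : ι => m) := by
  have : Nonempty ι := ⟨i₀⟩
  have hcover : ⋃ i, maxAt g i =ᵐ[Measure.pi fun _ : ι => m] univ := by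
    rw [eventuallyEq_univ]
    filter_upwards [hinj] with q hq
    exact mem_iUnion.mpr (exists_mem_maxAt hq)
  rw [← setIntegral_univ, ← setIntegral_congr_set hcover, integral_iUnion_fintype
    (measurableSet_maxAt hg) (fun _ _ => maxAt_disjoint) fun _ => hf.integrableOn]
  refine Finset.sum_congr rfl fun i _ => ?_
  rw [← integral_indicator (measurableSet_maxAt hg i),
    ← integral_indicator (measurableSet_maxAt hg i₀), ← integral_pi_comp_perm m (Equiv.swap i i₀)]
  refine integral_congr_ae (.of_forall fun q => ?_)
  have hswap := preimage_comp_perm_maxAt (g := g) (Equiv.swap i i₀) i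
  rw [Equiv.swap_apply_left] at hswap
  exact (hswap ▸ indicator_comp_right fun q : ι → X => q ∘ Equiv.swap i i₀).symm

theorem setIntegral_maxAt_last_prod {n : ℕ} (hg : Measurable g) {φ : X → X → ℝ}
    (hφ : Integrable (fun q : Fin (n + 1) → X => ∏ j : Fin n, φ (q (Fin.last n)) (q j.castSucc))
      (Measure.pi fun _ : Fin (n + 1) => m)) :
    ∫ q in maxAt g (Fin.last n), ∏ j : Fin n, φ (q (Fin.last n)) (q j.castSucc)
        ∂Measure.pi (fun _ : Fin (n + 1) => m) =
      ∫ c, (∫ a in {a | g a < g c}, φ c a ∂m) ^ n ∂m := by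
  have hmeas := measurableSet_maxAt hg (Fin.last n)
  have hind := hφ.indicator hmeas
  rw [← integral_indicator hmeas]
  simp only [funext (indicator_maxAt_last φ)] at hind ⊢
  rw [integral_prod_castSucc m (φ := fun c => {a | g a < g c}.indicator (φ c)) hind]
  simp only [integral_indicator (measurableSet_lt hg measurable_const)]

end SigmaFinite

variable (m : Measure X) [IsProbabilityMeasure m] [Fintype ι]

lemma map_pi_eval_pair {i j : ι} (hij : i ≠ j) :
    (Measure.pi fun _ : ι => m).map (fun p => (p i, p j)) = m.prod m := by
  have hind := (ProbabilityTheory.iIndepFun_pi (μ := fun _ : ι => m)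
    (X := fun _ => (id : X → X)) fun _ => aemeasurable_id).indepFun hij
  have hmap := (ProbabilityTheory.indepFun_iff_map_prod_eq_prod_map_map
    (measurable_pi_apply i).aemeasurable (measurable_pi_apply j).aemeasurable).mp hind
  simpa only [id_eq, (measurePreserving_eval (fun _ : ι => m) _).map_eq] using hmap

theorem ae_pi_injective [MeasurableEq X] [NullSingletonClass m] :
    ∀ᵐ p ∂Measure.pi (fun _ : ι => m), Function.Injective p := by
  have hne : ∀ i j : ι, i ≠ j → ∀ᵐ p ∂Measure.pi (fun _ : ι => m), p i ≠ p j := by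
    intro i j hij
    have hpair := ae_prod_fst_ne_snd m
    rw [← map_pi_eval_pair m hij] at hpair
    exact ae_of_ae_map (f := fun p : ι → X => (p i, p j)) (by fun_prop) hpair
  have hall : ∀ᵐ p ∂Measure.pi (fun _ : ι => m), ∀ i j : ι, i ≠ j → p i ≠ p j := by
    simpa only [ae_all_iff] using hne
  filter_upwards [hall] with p hp i j
  exact not_imp_not.mp (hp i j)

lemma card_mul_measureReal_maxAt (hg : Measurable g)
    (hinj : ∀ᵐ q ∂Measure.pi (fun _ : ι => m), Function.Injective (g ∘ q)) (i : ι) :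
    Fintype.card ι * (Measure.pi fun _ : ι => m).real (maxAt g i) = 1 := by
  classical
  have h := integral_eq_sum_setIntegral_maxAt m hg hinj (integrable_const (1 : ℝ)) i
  simpa using h.symm

end Sampling

section Permutons

instance : IsProbabilityMeasure (volume.restrict (Icc (0 : ℝ) 1)) := ⟨by simp⟩

lemma eq_volume_restrict_Icc {ν : Measure ℝ} [IsProbabilityMeasure ν]
    (h : ∀ x x' : ℝ, 0 ≤ x → x ≤ x' → x' ≤ 1 → ν (Icc x x') = ENNReal.ofReal (x' - x)) :
    ν = volume.restrict (Icc (0 : ℝ) 1) := by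
  have hIcc : ν (Icc 0 1)ᶜ = 0 := by
    rw [prob_compl_eq_zero_iff measurableSet_Icc, h 0 1 le_rfl zero_le_one le_rfl]
    simp
  refine Measure.ext_of_Iic _ _ fun t => ?_
  have hinter : Iic t ∩ Icc 0 1 = Icc (0 : ℝ) (min t 1) := by
    ext y
    simp only [mem_inter_iff, mem_Iic, mem_Icc, le_min_iff]
    tauto
  rw [Measure.restrict_apply measurableSet_Iic, hinter, Real.volume_Icc,
    ← measure_inter_conull hIcc, hinter]
  rcases le_or_gt 0 t with ht | ht
  · exact h 0 (min t 1) le_rfl (le_min ht zero_le_one) (min_le_right t 1)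
  · have hneg : min t 1 < 0 := (min_le_left t 1).trans_lt ht
    rw [Icc_eq_empty hneg.not_ge, measure_empty, ENNReal.ofReal_of_nonpos (by linarith)]

lemma ae_restrict_Icc_mem_Ioo {a b : ℝ} : ∀ᵐ x ∂volume.restrict (Icc a b), x ∈ Ioo a b := by
  rw [← restrict_Ioo_eq_restrict_Icc]
  exact ae_restrict_mem measurableSet_Ioo

namespace IsPermuton

variable {μ : Measure (ℝ × ℝ)}

lemma measure_compl_square (hμ : IsPermuton μ) : μ (Icc (0 : ℝ) 1 ×ˢ Icc (0 : ℝ) 1)ᶜ = 0 := by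
  have := hμ.1
  rw [prob_compl_eq_zero_iff (measurableSet_Icc.prod measurableSet_Icc),
    hμ.2.1 0 1 le_rfl zero_le_one le_rfl]
  simp

lemma measurePreserving_fst (hμ : IsPermuton μ) :
    MeasurePreserving Prod.fst μ (volume.restrict (Icc (0 : ℝ) 1)) := by
  have := hμ.1
  have := Measure.isProbabilityMeasure_map (μ := μ) measurable_fst.aemeasurable
  refine ⟨measurable_fst, eq_volume_restrict_Icc fun x x' h₀ h h₁ => ?_⟩
  rw [Measure.map_apply measurable_fst measurableSet_Icc, ← hμ.2.1 x x' h₀ h h₁,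
    ← measure_inter_conull hμ.measure_compl_square, ← prod_univ, prod_inter_prod,
    univ_inter, inter_eq_left.mpr (Icc_subset_Icc h₀ h₁)]

lemma measurePreserving_snd (hμ : IsPermuton μ) :
    MeasurePreserving Prod.snd μ (volume.restrict (Icc (0 : ℝ) 1)) := by
  have := hμ.1
  have := Measure.isProbabilityMeasure_map (μ := μ) measurable_snd.aemeasurable
  refine ⟨measurable_snd, eq_volume_restrict_Icc fun y y' h₀ h h₁ => ?_⟩
  rw [Measure.map_apply measurable_snd measurableSet_Icc, ← hμ.2.2 y y' h₀ h h₁,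
    ← measure_inter_conull hμ.measure_compl_square, ← univ_prod, prod_inter_prod,
    univ_inter, inter_eq_left.mpr (Icc_subset_Icc h₀ h₁)]

lemma ae_fst_ne (hμ : IsPermuton μ) (x : ℝ) : ∀ᵐ p ∂μ, p.1 ≠ x :=
  hμ.measurePreserving_fst.quasiMeasurePreserving.ae (Measure.ae_ne _ x)

lemma ae_snd_notMem (hμ : IsPermuton μ) {s : Set ℝ} (hs : s.Countable) : ∀ᵐ p ∂μ, p.2 ∉ s :=
  hμ.measurePreserving_snd.quasiMeasurePreserving.ae (hs.ae_notMem _)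

lemma ae_fst_mem_Ioo (hμ : IsPermuton μ) : ∀ᵐ p ∂μ, p.1 ∈ Ioo (0 : ℝ) 1 :=
  hμ.measurePreserving_fst.quasiMeasurePreserving.ae ae_restrict_Icc_mem_Ioo

lemma ae_snd_mem_Ioo (hμ : IsPermuton μ) : ∀ᵐ p ∂μ, p.2 ∈ Ioo (0 : ℝ) 1 :=
  hμ.measurePreserving_snd.quasiMeasurePreserving.ae ae_restrict_Icc_mem_Ioo

lemma ae_pi_injective_fst {ι : Type*} [Fintype ι] (hμ : IsPermuton μ) :
    ∀ᵐ p ∂Measure.pi (fun _ : ι => μ), Function.Injective fun i => (p i).1 := by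
  have := hμ.1
  exact (measurePreserving_pi _ _ fun _ => hμ.measurePreserving_fst).quasiMeasurePreserving.ae
    (ae_pi_injective _)

lemma ae_pi_injective_snd {ι : Type*} [Fintype ι] (hμ : IsPermuton μ) :
    ∀ᵐ p ∂Measure.pi (fun _ : ι => μ), Function.Injective fun i => (p i).2 := by
  have := hμ.1
  exact (measurePreserving_pi _ _ fun _ => hμ.measurePreserving_snd).quasiMeasurePreserving.ae
    (ae_pi_injective _)

theorem ext_Iio_prod_Iic {ν : Measure (ℝ × ℝ)} (hμ : IsPermuton μ) (hν : IsPermuton ν)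
    (h : ∀ t ∈ Icc (0 : ℝ) 1, ∀ u ∈ Icc (0 : ℝ) 1,
      μ.real (Iio t ×ˢ Iic u) = ν.real (Iio t ×ˢ Iic u)) : μ = ν := by
  have := hμ.1
  have := hν.1
  have hclamp : ∀ {ρ : Measure (ℝ × ℝ)}, IsPermuton ρ → ∀ t u : ℝ, ρ.real (Iio t ×ˢ Iic u) =
      ρ.real (Iio (max 0 (min t 1)) ×ˢ Iic (max 0 (min u 1))) := fun hρ t u => by
    refine measureReal_congr ?_
    filter_upwards [hρ.ae_fst_mem_Ioo, hρ.ae_snd_mem_Ioo] with p ⟨hx₀, hx₁⟩ ⟨hy₀, hy₁⟩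
    refine propext ?_
    change p.1 < t ∧ p.2 ≤ u ↔ p.1 < max 0 (min t 1) ∧ p.2 ≤ max 0 (min u 1)
    simp [hx₀.not_gt, hx₁, hy₀.not_ge, hy₁.le]
  have hmem : ∀ t : ℝ, max 0 (min t 1) ∈ Icc (0 : ℝ) 1 := fun t =>
    ⟨le_max_left _ _, max_le zero_le_one (min_le_right _ _)⟩
  have hspan : ∀ {C : ℝ → Set ℝ}, (∀ t, Iio t ⊆ C t) → IsCountablySpanning (range C) := fun hC =>
    ⟨fun n : ℕ => _, fun n => mem_range_self (n : ℝ), eq_univ_of_forall fun x =>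
      let ⟨n, hn⟩ := exists_nat_gt x
      mem_iUnion.mpr ⟨n, hC n hn⟩⟩
  refine ext_of_generate_finite _ (generateFrom_eq_prod
    ((borel_eq_generateFrom_Iio ℝ).symm.trans BorelSpace.measurable_eq.symm)
    ((borel_eq_generateFrom_Iic ℝ).symm.trans BorelSpace.measurable_eq.symm)
    (hspan fun t => subset_rfl) (hspan fun t => Iio_subset_Iic_self)).symm
    (isPiSystem_Iio.prod isPiSystem_Iic) ?_ (by simp)
  rintro _ ⟨_, ⟨t, rfl⟩, _, ⟨u, rfl⟩, rfl⟩
  rw [← measureReal_eq_measureReal_iff, hclamp hμ, hclamp hν]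
  exact h _ (hmem t) _ (hmem u)

end IsPermuton

lemma uniformPermuton_eq_prod : uniformPermuton =
    (volume.restrict (Icc (0 : ℝ) 1)).prod (volume.restrict (Icc (0 : ℝ) 1)) := by
  rw [Measure.prod_restrict]
  rfl

lemma isPermuton_uniformPermuton : IsPermuton uniformPermuton := by
  have hIcc : ∀ x x' : ℝ, 0 ≤ x → x' ≤ 1 →
      volume.restrict (Icc (0 : ℝ) 1) (Icc x x') = ENNReal.ofReal (x' - x) := fun x x' h₀ h₁ => by
    rw [Measure.restrict_apply measurableSet_Icc, inter_eq_left.mpr (Icc_subset_Icc h₀ h₁),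
      Real.volume_Icc]
  rw [uniformPermuton_eq_prod]
  refine ⟨inferInstance, fun x x' h₀ _ h₁ => ?_, fun y y' h₀ _ h₁ => ?_⟩
  · rw [Measure.prod_prod, hIcc x x' h₀ h₁, hIcc 0 1 le_rfl le_rfl]
    simp
  · rw [Measure.prod_prod, hIcc y y' h₀ h₁, hIcc 0 1 le_rfl le_rfl]
    simp

end Permutons

section Sawtooth

/-- The `1`-periodic sawtooth in `u - y`: it falls linearly from `1` to `-1` as `u` runs through
`[y, y + 1)`. -/
noncomputable def saw (u y : ℝ) : ℝ := 1 - 2 * Int.fract (u - y)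

lemma abs_saw_le_one (u y : ℝ) : |saw u y| ≤ 1 := by
  have h₀ := Int.fract_nonneg (u - y)
  have h₁ := Int.fract_lt_one (u - y)
  exact abs_le.mpr ⟨by unfold saw; linarith, by unfold saw; linarith⟩

lemma abs_saw_mul_saw_le_one (u y v z : ℝ) : |saw u y * saw v z| ≤ 1 := by
  rw [abs_mul]
  exact mul_le_one₀ (abs_saw_le_one u y) (abs_nonneg _) (abs_saw_le_one v z)

@[fun_prop]
lemma measurable_saw {α : Type*} [MeasurableSpace α] {f g : α → ℝ} (hf : Measurable f)
    (hg : Measurable g) : Measurable fun x => saw (f x) (g x) := by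
  unfold saw
  fun_prop

lemma integrable_saw_mul_saw {α : Type*} [MeasurableSpace α] {ν : Measure α} [IsFiniteMeasure ν]
    {f g f' g' : α → ℝ} (hf : Measurable f) (hg : Measurable g) (hf' : Measurable f')
    (hg' : Measurable g') : Integrable (fun x => saw (f x) (g x) * saw (f' x) (g' x)) ν :=
  .of_bound ((measurable_saw hf hg).mul (measurable_saw hf' hg')).aestronglyMeasurable 1
    (.of_forall fun _ => abs_saw_mul_saw_le_one _ _ _ _)

lemma integrable_saw_sq {α : Type*} [MeasurableSpace α] {ν : Measure α} [IsFiniteMeasure ν]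
    {f g : α → ℝ} (hf : Measurable f) (hg : Measurable g) :
    Integrable (fun x => saw (f x) (g x) ^ 2) ν := by
  simpa only [sq] using integrable_saw_mul_saw hf hg hf hg

lemma saw_of_le {u y : ℝ} (h₀ : y ≤ u) (h₁ : u < y + 1) : saw u y = 1 - 2 * (u - y) := by
  rw [saw, Int.fract_eq_self.mpr ⟨by linarith, by linarith⟩]

lemma saw_of_lt {u y : ℝ} (h₀ : u < y) (h₁ : y ≤ u + 1) : saw u y = -1 - 2 * (u - y) := by
  rw [saw, ← Int.fract_add_one, Int.fract_eq_self.mpr ⟨by linarith, by linarith⟩]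
  ring

lemma saw_periodic_left (y : ℝ) : Function.Periodic (fun u => saw u y) 1 := fun u => by
  simp only [saw, add_sub_right_comm, Int.fract_add_one]

lemma saw_add_fract (a b u : ℝ) : saw u (b + Int.fract (a - b)) = saw u a := by
  have h : u - (b + Int.fract (a - b)) = u - a + ⌊a - b⌋ := by
    rw [Int.fract]
    ring
  rw [saw, h, Int.fract_add_intCast, saw]

lemma saw_sq_eq (a b c : ℝ) : saw a b ^ 2 = (1 - |saw c a - saw c b|) ^ 2 := by
  -- `saw a b ^ 2` depends only on the distance of `a` and `b` on the circle `ℝ / ℤ`, which can be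
  -- read off from their positions relative to `c`.
  have hfract : Int.fract (a - b) = Int.fract (Int.fract (c - b) - Int.fract (c - a)) := by
    refine Int.fract_eq_fract.mpr ⟨⌊c - b⌋ - ⌊c - a⌋, ?_⟩
    rw [Int.fract, Int.fract]
    push_cast
    ring
  simp only [saw, hfract]
  have ha₀ := Int.fract_nonneg (c - a)
  have ha₁ := Int.fract_lt_one (c - a)
  have hb₀ := Int.fract_nonneg (c - b)
  have hb₁ := Int.fract_lt_one (c - b)
  set f := Int.fract (c - a)
  set g := Int.fract (c - b)
  rcases le_or_gt f g with hfg | hfg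
  · rw [Int.fract_eq_self.mpr ⟨by linarith, by linarith⟩, abs_of_nonneg (by linarith)]
    ring
  · rw [← Int.fract_add_one (g - f), Int.fract_eq_self.mpr ⟨by linarith, by linarith⟩,
      abs_of_neg (by linarith)]
    ring

lemma saw_sq_comm (a b : ℝ) : saw a b ^ 2 = saw b a ^ 2 := by
  rw [saw_sq_eq a b 0, saw_sq_eq b a 0, abs_sub_comm]

lemma abs_saw_sub_saw (a b c : ℝ) :
    |saw c a - saw c b| / 2 =
      1 / 4 + (saw c a ^ 2 + saw c b ^ 2 - saw a b ^ 2) / 4 - saw c a * saw c b / 2 := by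
  rw [saw_sq_eq a b c]
  linarith [sq_abs (saw c a - saw c b)]

lemma Interlace.comm_left {α : Type*} [LT α] {a b c d : α} :
    Interlace a b c d ↔ Interlace b a c d := by
  rw [Interlace, Interlace, or_comm, or_comm (a := a < d ∧ d < b)]

lemma volume_real_interlace_of_lt {a b c : ℝ} (ha : a ∈ Ioo (0 : ℝ) 1) (hb : b ∈ Ioo (0 : ℝ) 1)
    (hc : c ∈ Ioo (0 : ℝ) 1) (hca : c ≠ a) (hab : a < b) :
    (volume.restrict (Icc (0 : ℝ) 1)).real {v | Interlace a b c v} = |saw c a - saw c b| / 2 := by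
  have hsub : Ioo a b ⊆ Icc 0 1 := Ioo_subset_Icc_self.trans (Icc_subset_Icc ha.1.le hb.2.le)
  have hvol : (volume.restrict (Icc (0 : ℝ) 1)).real (Ioo a b) = b - a := by
    rw [measureReal_restrict_apply measurableSet_Ioo, inter_eq_left.mpr hsub,
      Real.volume_real_Ioo_of_le hab.le]
  obtain ⟨ha₀, -⟩ := ha
  obtain ⟨-, hb₁⟩ := hb
  obtain ⟨hc₀, hc₁⟩ := hc
  by_cases hmid : a < c ∧ c < b
  · have hset : {v | Interlace a b c v} = (Ioo a b)ᶜ := by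
      ext v
      simp only [Interlace, Xor, mem_ofPred_eq, mem_compl_iff, mem_Ioo]
      grind
    rw [hset, probReal_compl_eq_one_sub measurableSet_Ioo, hvol, saw_of_le hmid.1.le (by linarith),
      saw_of_lt hmid.2 (by linarith), abs_of_pos (by linarith)]
    ring
  · have hset : {v | Interlace a b c v} = Ioo a b := by
      ext v
      simp only [Interlace, Xor, mem_ofPred_eq, mem_Ioo]
      grind
    rw [hset, hvol]
    rcases lt_or_gt_of_ne hca with hlt | hgt
    · rw [saw_of_lt hlt (by linarith), saw_of_lt (hlt.trans hab) (by linarith),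
        abs_of_neg (by linarith)]
      ring
    · have hbc : b ≤ c := not_lt.mp fun h => hmid ⟨hgt, h⟩
      rw [saw_of_le hgt.le (by linarith), saw_of_le hbc (by linarith), abs_of_neg (by linarith)]
      ring

lemma volume_real_interlace {a b c : ℝ} (ha : a ∈ Ioo (0 : ℝ) 1) (hb : b ∈ Ioo (0 : ℝ) 1)
    (hc : c ∈ Ioo (0 : ℝ) 1) (hca : c ≠ a) (hcb : c ≠ b) (hab : a ≠ b) :
    (volume.restrict (Icc (0 : ℝ) 1)).real {v | Interlace a b c v} = |saw c a - saw c b| / 2 := by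
  rcases hab.lt_or_gt with hlt | hgt
  · exact volume_real_interlace_of_lt ha hb hc hca hlt
  · simp only [Interlace.comm_left (a := a)]
    rw [volume_real_interlace_of_lt hb ha hc hcb hgt, abs_sub_comm]

lemma integral_quadratic (p q r s t : ℝ) :
    ∫ x in s..t, (p + q * x + r * x ^ 2) =
      p * (t - s) + q * (t ^ 2 - s ^ 2) / 2 + r * (t ^ 3 - s ^ 3) / 3 := by
  have hderiv : ∀ x ∈ uIcc s t,
      HasDerivAt (fun x => p * x + q * (x ^ 2 / 2) + r * (x ^ 3 / 3))
        (p + q * x + r * x ^ 2) x := by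
    intro x _
    have h := (((hasDerivAt_id x).const_mul p).add
      (((hasDerivAt_pow 2 x).div_const 2).const_mul q)).add
      (((hasDerivAt_pow 3 x).div_const 3).const_mul r)
    refine h.congr_deriv ?_
    push_cast
    ring
  rw [intervalIntegral.integral_eq_sub_of_hasDerivAt hderiv
    (Continuous.intervalIntegrable (by fun_prop) _ _)]
  ring

theorem integral_saw_mul_saw (a b : ℝ) :
    ∫ u in Icc (0 : ℝ) 1, saw u a * saw u b = saw a b ^ 2 / 2 - 1 / 6 := by
  set δ := Int.fract (a - b)
  have hδ₀ : 0 ≤ δ := Int.fract_nonneg _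
  have hδ₁ : δ < 1 := Int.fract_lt_one _
  have hper : Function.Periodic (fun u => saw u a * saw u b) 1 :=
    (saw_periodic_left a).mul (saw_periodic_left b)
  have hshift : ∫ u in Icc (0 : ℝ) 1, saw u a * saw u b =
      ∫ s in (0 : ℝ)..1, saw (b + s) a * saw (b + s) b := by
    have h := hper.intervalIntegral_add_eq 0 b
    rw [integral_Icc_eq_integral_Ioc, ← intervalIntegral.integral_of_le zero_le_one,
      intervalIntegral.integral_comp_add_left (fun u => saw u a * saw u b)]
    simpa using h
  have hint : ∀ s t, IntervalIntegrable (fun s => saw (b + s) a * saw (b + s) b) volume s t :=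
    fun s t => (intervalIntegrable_const (c := 1)).mono_fun'
      (Measurable.aestronglyMeasurable (by fun_prop))
      (.of_forall fun s => abs_saw_mul_saw_le_one _ _ _ _)
  have hlow : ∫ s in (0 : ℝ)..δ, saw (b + s) a * saw (b + s) b =
      ∫ s in (0 : ℝ)..δ, (2 * δ - 1 - 4 * δ * s + 4 * s ^ 2) := by
    refine intervalIntegral.integral_congr_Ioo_of_le hδ₀ fun s hs => ?_
    rw [← saw_add_fract a b, saw_of_le (y := b) (by linarith [hs.1]) (by linarith [hs.2]),
      saw_of_lt (by linarith [hs.2]) (by linarith [hs.1])]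
    ring
  have hhigh : ∫ s in δ..1, saw (b + s) a * saw (b + s) b =
      ∫ s in δ..1, (1 + 2 * δ - 4 * (1 + δ) * s + 4 * s ^ 2) := by
    refine intervalIntegral.integral_congr_Ioo_of_le hδ₁.le fun s hs => ?_
    rw [← saw_add_fract a b, saw_of_le (y := b) (by linarith [hs.1]) (by linarith [hs.2]),
      saw_of_le (by linarith [hs.1]) (by linarith [hs.2])]
    ring
  rw [hshift, ← intervalIntegral.integral_add_adjacent_intervals (hint 0 δ) (hint δ 1), hlow, hhigh]
  simp only [sub_eq_add_neg, ← neg_mul, integral_quadratic]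
  rw [saw]
  ring

lemma integral_saw_right (u : ℝ) : ∫ y in Icc (0 : ℝ) 1, saw u y = 0 := by
  have hper : Function.Periodic (fun x => saw x 0) 1 := saw_periodic_left 0
  have hone : ∫ x in (0 : ℝ)..1, saw x 0 = ∫ x in (0 : ℝ)..1, (1 + -2 * x + 0 * x ^ 2) := by
    refine intervalIntegral.integral_congr_Ioo_of_le zero_le_one fun x hx => ?_
    rw [saw_of_le hx.1.le (by linarith [hx.2])]
    ring
  calc ∫ y in Icc (0 : ℝ) 1, saw u y
      = ∫ y in (0 : ℝ)..1, saw (u - y) 0 := by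
        rw [integral_Icc_eq_integral_Ioc, ← intervalIntegral.integral_of_le zero_le_one]
        simp only [saw, sub_zero]
    _ = ∫ x in (0 : ℝ)..1, saw x 0 := by
        rw [intervalIntegral.integral_comp_sub_left (fun x => saw x 0)]
        simpa using hper.intervalIntegral_add_eq (u - 1) 0
    _ = 0 := by
        rw [hone, integral_quadratic]
        norm_num

lemma saw_sub_saw_zero {u y : ℝ} (hu : u ∈ Icc (0 : ℝ) 1) (hy : y ∈ Ioo (0 : ℝ) 1) :
    saw u y - saw 0 y = 2 * ((Iic u).indicator 1 y - u) := by
  rw [saw_of_lt hy.1 (by linarith [hy.2])]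
  rcases le_or_gt y u with hyu | hyu
  · rw [saw_of_le hyu (by linarith [hu.2, hy.1]), indicator_of_mem (mem_Iic.mpr hyu), Pi.one_apply]
    ring
  · rw [saw_of_lt hyu (by linarith [hu.1, hy.2]), indicator_of_notMem (notMem_Iic.mpr hyu)]
    ring

end Sawtooth

section RightmostInterlace

/-- Among four labelled points, the one with index `2` lies to the right of those with indices `0`
and `1`, and the heights of the latter interlace those of the points with indices `2` and `3`. -/
def rightmostInterlace : Set (Fin 4 → ℝ × ℝ) :=
  {p | (p 0).1 < (p 2).1 ∧ (p 1).1 < (p 2).1 ∧ Interlace (p 0).2 (p 1).2 (p 2).2 (p 3).2}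

lemma measurableSet_rightmostInterlace : MeasurableSet rightmostInterlace := by
  unfold rightmostInterlace Interlace Xor
  measurability

lemma sum_indicator_rightmostInterlace {π : Equiv.Perm (Fin 4)} {p : Fin 4 → ℝ × ℝ}
    (h : HasPattern π p) :
    ∑ σ : Equiv.Perm (Fin 4), rightmostInterlace.indicator (1 : (Fin 4 → ℝ × ℝ) → ℝ) (p ∘ σ) =
      if Interlace (π 0) (π 1) (π 2) (π 3) then 4 else 2 := by
  obtain ⟨σ₀, hx, hy⟩ := h
  have hmem : ∀ σ : Equiv.Perm (Fin 4), p ∘ (σ₀ * σ) ∈ rightmostInterlace ↔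
      σ 0 < σ 2 ∧ σ 1 < σ 2 ∧ Interlace (π (σ 0)) (π (σ 1)) (π (σ 2)) (π (σ 3)) := fun σ => by
    simp only [rightmostInterlace, Interlace, mem_ofPred_eq, Function.comp_apply,
      Equiv.Perm.mul_apply, hy]
    exact and_congr hx.lt_iff_lt (and_congr_left' hx.lt_iff_lt)
  rw [← Equiv.sum_comp (Equiv.mulLeft σ₀)]
  simp only [Equiv.coe_mulLeft, indicator, hmem, Pi.one_apply, Finset.sum_boole,
    card_rightmost_interlace, Nat.cast_ite, Nat.cast_ofNat]

theorem IsPermuton.mul_measureReal_rightmostInterlace {μ : Measure (ℝ × ℝ)} (hμ : IsPermuton μ) :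
    24 * (Measure.pi fun _ : Fin 4 => μ).real rightmostInterlace =
      2 + 2 * ∑ π : Equiv.Perm (Fin 4) with Interlace (π 0) (π 1) (π 2) (π 3),
        PermutonDensity π μ := by
  have := hμ.1
  set S : Finset (Equiv.Perm (Fin 4)) := {π | Interlace (π 0) (π 1) (π 2) (π 3)} with hS
  set B : Set (Fin 4 → ℝ × ℝ) := ⋃ π ∈ S, {p | HasPattern π p}
  have hBmeas : MeasurableSet B := S.measurableSet_biUnion fun π _ => measurableSet_hasPattern π
  have hcount : ∀ᵐ p ∂Measure.pi fun _ : Fin 4 => μ,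
      ∑ σ : Equiv.Perm (Fin 4), rightmostInterlace.indicator (1 : (Fin 4 → ℝ × ℝ) → ℝ) (p ∘ σ) =
        2 + 2 * B.indicator 1 p := by
    filter_upwards [hμ.ae_pi_injective_fst, hμ.ae_pi_injective_snd] with p hx hy
    obtain ⟨π, hπ⟩ := exists_hasPattern hx hy
    have hmem : p ∈ B ↔ Interlace (π 0) (π 1) (π 2) (π 3) := by
      refine ⟨fun h => ?_, fun h => mem_biUnion (by simpa [hS] using h) hπ⟩
      obtain ⟨ρ, hρS, hρ⟩ := mem_iUnion₂.mp h
      rw [hπ.unique hρ]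
      simpa [hS] using hρS
    rw [sum_indicator_rightmostInterlace hπ]
    simp only [indicator, hmem, Pi.one_apply]
    split_ifs <;> norm_num
  have hsum := integral_sum_comp_perm μ (ι := Fin 4) (f := rightmostInterlace.indicator 1)
    ((integrable_const (1 : ℝ)).indicator measurableSet_rightmostInterlace)
  have hB : Integrable (B.indicator (1 : (Fin 4 → ℝ × ℝ) → ℝ)) (Measure.pi fun _ => μ) :=
    (integrable_const (1 : ℝ)).indicator hBmeas
  rw [integral_congr_ae hcount, integral_add (integrable_const _) (hB.const_mul _),
    integral_const_mul, integral_indicator_one hBmeas,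
    integral_indicator_one measurableSet_rightmostInterlace, integral_const, probReal_univ,
    Fintype.card_fin, one_smul] at hsum
  rw [sum_permutonDensity, hsum]
  norm_num [Nat.factorial]

end RightmostInterlace

section Discrepancy

lemma insertNth_last_mem_rightmostInterlace (z : ℝ × ℝ) (q : Fin 3 → ℝ × ℝ) :
    (Fin.last 3).insertNth z q ∈ rightmostInterlace ↔
      q ∈ maxAt Prod.fst (Fin.last 2) ∧ Interlace (q 0).2 (q 1).2 (q 2).2 z.2 := by
  have hmax : q ∈ maxAt Prod.fst (Fin.last 2) ↔ (q 0).1 < (q 2).1 ∧ (q 1).1 < (q 2).1 := by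
    simp [maxAt, Fin.forall_fin_succ]
  rw [hmax, and_assoc]
  rfl

/-- The `μ`-mass strictly to the left of `z`, weighted by the sawtooth based at the height of `z`.
It vanishes identically on the unit square exactly when the permuton `μ` is uniform. -/
noncomputable def discrepancy (μ : Measure (ℝ × ℝ)) (z : ℝ × ℝ) : ℝ :=
  ∫ p in {p | p.1 < z.1}, saw z.2 p.2 ∂μ

/-- The law of three independent `μ`-distributed points, restricted to the event that the last of
them is the rightmost one. -/
noncomputable abbrev rightmostLaw (μ : Measure (ℝ × ℝ)) : Measure (Fin 3 → ℝ × ℝ) :=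
  (Measure.pi fun _ => μ).restrict (maxAt Prod.fst (Fin.last 2))

variable {μ : Measure (ℝ × ℝ)}

lemma abs_discrepancy_le_one [IsProbabilityMeasure μ] (z : ℝ × ℝ) : |discrepancy μ z| ≤ 1 :=
  calc |discrepancy μ z| ≤ 1 * μ.real {p | p.1 < z.1} :=
        norm_setIntegral_le_of_norm_le_const (f := fun p : ℝ × ℝ => saw z.2 p.2)
          (measure_lt_top _ _) fun p _ => abs_saw_le_one _ _
    _ ≤ 1 := by simp [measureReal_le_one]

lemma measurable_discrepancy [SFinite μ] : Measurable (discrepancy μ) := by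
  have hset : ∀ z : ℝ × ℝ, MeasurableSet {p : ℝ × ℝ | p.1 < z.1} := fun z =>
    measurableSet_lt measurable_fst measurable_const
  have hpair : MeasurableSet {w : (ℝ × ℝ) × ℝ × ℝ | w.2.1 < w.1.1} :=
    measurableSet_lt (by fun_prop) (by fun_prop)
  have hsaw : Measurable fun w : (ℝ × ℝ) × ℝ × ℝ => saw w.1.2 w.2.2 := by fun_prop
  have heq : discrepancy μ = fun z => ∫ p, {w : (ℝ × ℝ) × ℝ × ℝ | w.2.1 < w.1.1}.indicator
      (fun w => saw w.1.2 w.2.2) (z, p) ∂μ := by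
    ext z
    exact (integral_indicator (hset z)).symm
  rw [heq]
  exact (hsaw.indicator hpair).stronglyMeasurable.integral_prod_right'.measurable

lemma integral_rightmostLaw_saw_mul_saw [IsProbabilityMeasure μ] (h : ℝ × ℝ → ℝ)
    (hh : Measurable h) :
    ∫ q, saw (h (q 2)) (q 0).2 * saw (h (q 2)) (q 1).2 ∂rightmostLaw μ =
      ∫ c, discrepancy μ (c.1, h c) ^ 2 ∂μ := by
  have hint : Integrable (fun q : Fin 3 → ℝ × ℝ =>
      ∏ j : Fin 2, saw (h (q (Fin.last 2))) (q j.castSucc).2) (Measure.pi fun _ => μ) := by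
    simp only [Fin.prod_univ_two]
    exact integrable_saw_mul_saw (by fun_prop) (by fun_prop) (by fun_prop) (by fun_prop)
  have hfubini :=
    setIntegral_maxAt_last_prod μ measurable_fst (φ := fun c a => saw (h c) a.2) hint
  simp only [Fin.prod_univ_two] at hfubini
  exact hfubini

namespace IsPermuton

theorem measureReal_rightmostInterlace_eq_integral (hμ : IsPermuton μ) :
    (Measure.pi fun _ : Fin 4 => μ).real rightmostInterlace =
      ∫ q, (volume.restrict (Icc (0 : ℝ) 1)).real {v | Interlace (q 0).2 (q 1).2 (q 2).2 v}
        ∂rightmostLaw μ := by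
  have := hμ.1
  have hint : Integrable (rightmostInterlace.indicator (1 : (Fin 4 → ℝ × ℝ) → ℝ))
      (Measure.pi fun _ => μ) :=
    (integrable_const (1 : ℝ)).indicator measurableSet_rightmostInterlace
  rw [← integral_indicator_one measurableSet_rightmostInterlace,
    integral_pi_eq_integral_prod μ (Fin.last 3),
    integral_prod_symm _ (integrable_prod_insertNth μ _ hint),
    ← integral_indicator (measurableSet_maxAt measurable_fst _)]
  refine integral_congr_ae (.of_forall fun q => ?_)
  have hmeas : MeasurableSet {v | Interlace (q 0).2 (q 1).2 (q 2).2 v} := by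
    unfold Interlace Xor
    measurability
  have hsec : ∀ z : ℝ × ℝ, rightmostInterlace.indicator (1 : (Fin 4 → ℝ × ℝ) → ℝ)
      ((Fin.last 3).insertNth z q) = (maxAt Prod.fst (Fin.last 2)).indicator
        (fun q => (Prod.snd ⁻¹' {v | Interlace (q 0).2 (q 1).2 (q 2).2 v}).indicator 1 z) q :=
    fun z => by
      classical
      simp only [indicator_apply, insertNth_last_mem_rightmostInterlace, ite_and, Pi.one_apply,
        mem_preimage, mem_ofPred_eq]
  simp only [hsec]
  by_cases hq : q ∈ maxAt Prod.fst (Fin.last 2)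
  · simp only [indicator_of_mem hq]
    rw [integral_indicator_one (measurable_snd hmeas),
      hμ.measurePreserving_snd.measureReal_preimage hmeas.nullMeasurableSet]
  · simp only [indicator_of_notMem hq, integral_zero]

lemma integral_discrepancy_sq_uniform (hμ : IsPermuton μ) :
    ∫ z, discrepancy μ z ^ 2 ∂uniformPermuton =
      ∫ q, (∫ u in Icc (0 : ℝ) 1, saw u (q 0).2 * saw u (q 1).2) ∂rightmostLaw μ := by
  have := hμ.1
  have hJ : Integrable (fun z => discrepancy μ z ^ 2)
      ((volume.restrict (Icc (0 : ℝ) 1)).prod (volume.restrict (Icc (0 : ℝ) 1))) :=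
    .of_bound (measurable_discrepancy.pow_const 2).aestronglyMeasurable 1 (.of_forall fun z => by
      rw [norm_pow]
      exact pow_le_one₀ (norm_nonneg _) (abs_discrepancy_le_one z))
  have hint : Integrable (fun w : ℝ × (Fin 3 → ℝ × ℝ) => saw w.1 (w.2 0).2 * saw w.1 (w.2 1).2)
      ((volume.restrict (Icc (0 : ℝ) 1)).prod (rightmostLaw μ)) :=
    integrable_saw_mul_saw (by fun_prop) (by fun_prop) (by fun_prop) (by fun_prop)
  calc ∫ z, discrepancy μ z ^ 2 ∂uniformPermuton
      = ∫ u in Icc (0 : ℝ) 1, ∫ t in Icc (0 : ℝ) 1, discrepancy μ (t, u) ^ 2 := by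
        rw [uniformPermuton_eq_prod, integral_prod_symm _ hJ]
    _ = ∫ u in Icc (0 : ℝ) 1, ∫ c, discrepancy μ (c.1, u) ^ 2 ∂μ := by
        refine integral_congr_ae (.of_forall fun u => ?_)
        have hmeas : Measurable fun t => discrepancy μ (t, u) ^ 2 :=
          (measurable_discrepancy.comp (by fun_prop)).pow_const 2
        rw [← hμ.measurePreserving_fst.map_eq]
        exact integral_map measurable_fst.aemeasurable hmeas.aestronglyMeasurable
    _ = ∫ u in Icc (0 : ℝ) 1, ∫ q, saw u (q 0).2 * saw u (q 1).2 ∂rightmostLaw μ := by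
        simp only [integral_rightmostLaw_saw_mul_saw (fun _ => _) measurable_const]
    _ = _ := integral_integral_swap hint

lemma integral_saw_snd_sq (hμ : IsPermuton μ) {ι : Type*} [Fintype ι] {i j : ι} (hij : i ≠ j) :
    ∫ q, saw (q i).2 (q j).2 ^ 2 ∂Measure.pi (fun _ : ι => μ) = 1 / 3 := by
  have := hμ.1
  have hmeas : Measurable fun z : (ℝ × ℝ) × ℝ × ℝ => saw z.1.2 z.2.2 ^ 2 := by fun_prop
  have hint : Integrable (fun z : (ℝ × ℝ) × ℝ × ℝ => saw z.1.2 z.2.2 ^ 2) (μ.prod μ) :=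
    integrable_saw_sq (by fun_prop) (by fun_prop)
  have hinner : ∀ u : ℝ, ∫ p, saw u p.2 ^ 2 ∂μ = 1 / 3 := fun u =>
    calc ∫ p, saw u p.2 ^ 2 ∂μ = ∫ y in Icc (0 : ℝ) 1, saw u y ^ 2 := by
          have hu : Measurable fun y => saw u y ^ 2 := by fun_prop
          rw [← hμ.measurePreserving_snd.map_eq,
            integral_map measurable_snd.aemeasurable hu.aestronglyMeasurable]
      _ = ∫ y in Icc (0 : ℝ) 1, saw y u * saw y u := by simp only [saw_sq_comm u, sq]
      _ = 1 / 3 := by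
          rw [integral_saw_mul_saw, saw_of_le le_rfl (by linarith)]
          norm_num
  calc ∫ q, saw (q i).2 (q j).2 ^ 2 ∂Measure.pi (fun _ : ι => μ)
      = ∫ z, saw z.1.2 z.2.2 ^ 2 ∂μ.prod μ := by
        rw [← map_pi_eval_pair μ hij, integral_map (by fun_prop) hmeas.aestronglyMeasurable]
    _ = 1 / 3 := by simp [integral_prod _ hint, hinner]

lemma measureReal_rightmostLaw_univ (hμ : IsPermuton μ) : (rightmostLaw μ).real univ = 1 / 3 := by
  have := hμ.1
  have hthird := card_mul_measureReal_maxAt (ι := Fin 3) μ measurable_fst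
    hμ.ae_pi_injective_fst (Fin.last 2)
  rw [Fintype.card_fin, Nat.cast_ofNat] at hthird
  rw [measureReal_restrict_apply_univ]
  linarith

lemma integral_rightmostLaw_saw_sq (hμ : IsPermuton μ) :
    ∫ q, saw (q 0).2 (q 1).2 ^ 2 ∂rightmostLaw μ =
      1 / 9 + 2 * ∫ z, discrepancy μ z ^ 2 ∂uniformPermuton := by
  have := hμ.1
  simp only [hμ.integral_discrepancy_sq_uniform, integral_saw_mul_saw]
  rw [integral_sub ((integrable_saw_sq (by fun_prop) (by fun_prop)).div_const 2)
    (integrable_const _), integral_div, integral_const, hμ.measureReal_rightmostLaw_univ,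
    smul_eq_mul]
  ring

lemma sum_integral_rightmostLaw_saw_sq (hμ : IsPermuton μ) :
    ∫ q, saw (q 2).2 (q 1).2 ^ 2 ∂rightmostLaw μ +
      ∫ q, saw (q 0).2 (q 2).2 ^ 2 ∂rightmostLaw μ +
      ∫ q, saw (q 0).2 (q 1).2 ^ 2 ∂rightmostLaw μ = 1 / 3 := by
  have := hμ.1
  have hsplit := integral_eq_sum_setIntegral_maxAt μ measurable_fst hμ.ae_pi_injective_fst
    (f := fun q : Fin 3 → ℝ × ℝ => saw (q 0).2 (q 1).2 ^ 2)
    (integrable_saw_sq (by fun_prop) (by fun_prop)) (Fin.last 2)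
  rw [hμ.integral_saw_snd_sq (by decide), Fin.sum_univ_three] at hsplit
  exact hsplit.symm

lemma ae_measureReal_interlace (hμ : IsPermuton μ) :
    ∀ᵐ q ∂Measure.pi fun _ : Fin 3 => μ,
      (volume.restrict (Icc (0 : ℝ) 1)).real {v | Interlace (q 0).2 (q 1).2 (q 2).2 v} =
        1 / 4 + (saw (q 2).2 (q 1).2 ^ 2 + saw (q 0).2 (q 2).2 ^ 2 - saw (q 0).2 (q 1).2 ^ 2) / 4 -
          saw (q 2).2 (q 0).2 * saw (q 2).2 (q 1).2 / 2 := by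
  have := hμ.1
  have hmem : ∀ᵐ q ∂Measure.pi (fun _ : Fin 3 => μ), ∀ i, (q i).2 ∈ Ioo (0 : ℝ) 1 :=
    ae_all_iff.mpr fun i =>
      (measurePreserving_eval (fun _ : Fin 3 => μ) i).quasiMeasurePreserving.ae hμ.ae_snd_mem_Ioo
  filter_upwards [hmem, hμ.ae_pi_injective_snd] with q hq hinj
  rw [volume_real_interlace (hq 0) (hq 1) (hq 2) (hinj.ne (by decide)) (hinj.ne (by decide))
    (hinj.ne (by decide)), abs_saw_sub_saw, saw_sq_comm (q 2).2 (q 0).2,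
    add_comm (saw (q 0).2 _ ^ 2)]

theorem measureReal_rightmostInterlace_eq (hμ : IsPermuton μ) :
    (Measure.pi fun _ : Fin 4 => μ).real rightmostInterlace =
      1 / 9 - ∫ z, discrepancy μ z ^ 2 ∂uniformPermuton - (∫ z, discrepancy μ z ^ 2 ∂μ) / 2 := by
  have := hμ.1
  have hsq : ∀ i j, Integrable (fun q : Fin 3 → ℝ × ℝ => saw (q i).2 (q j).2 ^ 2)
      (rightmostLaw μ) := fun i j => integrable_saw_sq (by fun_prop) (by fun_prop)
  have hprod : Integrable
      (fun q : Fin 3 → ℝ × ℝ => saw (q 2).2 (q 0).2 * saw (q 2).2 (q 1).2 / 2) (rightmostLaw μ) :=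
    (integrable_saw_mul_saw (by fun_prop) (by fun_prop) (by fun_prop) (by fun_prop)).div_const 2
  have hsum := (hsq 2 1).fun_add (hsq 0 2)
  have hdiff := (hsum.sub' (hsq 0 1)).div_const 4
  have hsum_sq := hμ.sum_integral_rightmostLaw_saw_sq
  rw [hμ.measureReal_rightmostInterlace_eq_integral,
    integral_congr_ae (ae_restrict_of_ae hμ.ae_measureReal_interlace),
    integral_sub ((integrable_const _).fun_add hdiff) hprod,
    integral_add (integrable_const _) hdiff, integral_const, hμ.measureReal_rightmostLaw_univ,
    integral_div, integral_sub hsum (hsq 0 1), integral_add (hsq 2 1) (hsq 0 2), integral_div,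
    integral_rightmostLaw_saw_mul_saw _ measurable_snd, hμ.integral_rightmostLaw_saw_sq,
    smul_eq_mul]
  rw [hμ.integral_rightmostLaw_saw_sq] at hsum_sq
  linarith

end IsPermuton
end Discrepancy

section Uniqueness

variable {μ : Measure (ℝ × ℝ)}

lemma discrepancy_uniformPermuton (z : ℝ × ℝ) : discrepancy uniformPermuton z = 0 := by
  have hset : {p : ℝ × ℝ | p.1 < z.1} = Iio z.1 ×ˢ univ := by
    ext p
    simp
  rw [discrepancy, uniformPermuton_eq_prod, hset]
  have h := setIntegral_prod_mul (μ := volume.restrict (Icc (0 : ℝ) 1))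
    (ν := volume.restrict (Icc (0 : ℝ) 1)) (fun _ => (1 : ℝ)) (saw z.2) (Iio z.1) univ
  simp only [one_mul, Measure.restrict_univ, integral_saw_right, mul_zero] at h
  exact h

lemma continuousAt_indicator_saw {z p : ℝ × ℝ} (hfst : p.1 ≠ z.1)
    (hsnd : p.2 ∉ range fun n : ℤ => z.2 - n) :
    ContinuousAt
      (fun w : ℝ × ℝ => {p : ℝ × ℝ | p.1 < w.1}.indicator (fun p => saw w.2 p.2) p) z := by
  have hsaw : ContinuousAt (fun w : ℝ × ℝ => saw w.2 p.2) z := by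
    have hfract : ContinuousAt (Int.fract : ℝ → ℝ) (z.2 - p.2) :=
      continuousAt_fract fun h => hsnd ⟨⌊z.2 - p.2⌋, by linarith⟩
    have hsub : ContinuousAt (fun w : ℝ × ℝ => w.2 - p.2) z := by fun_prop
    exact continuousAt_const.sub
      (continuousAt_const.mul (hfract.comp (f := fun w : ℝ × ℝ => w.2 - p.2) hsub))
  rcases hfst.lt_or_gt with hlt | hgt
  · refine hsaw.congr ?_
    filter_upwards [continuousAt_fst.eventually_const_lt hlt] with w hw
    exact (indicator_of_mem (s := {p : ℝ × ℝ | p.1 < w.1}) hw fun p => saw w.2 p.2).symm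
  · have hzero : ContinuousAt (fun _ : ℝ × ℝ => (0 : ℝ)) z := continuousAt_const
    refine hzero.congr ?_
    filter_upwards [continuousAt_fst.eventually_lt_const hgt] with w hw
    exact (indicator_of_notMem (s := {p : ℝ × ℝ | p.1 < w.1}) hw.not_gt _).symm

namespace IsPermuton

lemma continuous_discrepancy (hμ : IsPermuton μ) : Continuous (discrepancy μ) := by
  have := hμ.1
  have hset : ∀ z : ℝ × ℝ, MeasurableSet {p : ℝ × ℝ | p.1 < z.1} := fun z =>
    measurableSet_lt measurable_fst measurable_const
  have heq : discrepancy μ = fun z =>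
      ∫ p, {p : ℝ × ℝ | p.1 < z.1}.indicator (fun p => saw z.2 p.2) p ∂μ :=
    funext fun z => (integral_indicator (hset z)).symm
  rw [heq]
  refine continuous_iff_continuousAt.mpr fun z => continuousAt_of_dominated (bound := fun _ => 1)
    (.of_forall fun w => ((show Measurable fun p : ℝ × ℝ => saw w.2 p.2 by fun_prop).indicator
      (hset w)).aestronglyMeasurable)
    (.of_forall fun w => .of_forall fun p =>
      (norm_indicator_le_norm_self _ _).trans (abs_saw_le_one _ _))
    (integrable_const 1) ?_
  filter_upwards [hμ.ae_fst_ne z.1, hμ.ae_snd_notMem (countable_range fun n : ℤ => z.2 - n)]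
    with p hfst hsnd
  exact continuousAt_indicator_saw hfst hsnd

lemma discrepancy_eq_zero_of_integral_sq_eq_zero (hμ : IsPermuton μ)
    (h : ∫ z, discrepancy μ z ^ 2 ∂uniformPermuton = 0) :
    EqOn (discrepancy μ) 0 (Icc (0 : ℝ) 1 ×ˢ Icc (0 : ℝ) 1) := by
  have hcont := hμ.continuous_discrepancy
  have hint : IntegrableOn (fun z => discrepancy μ z ^ 2) (Icc (0 : ℝ) 1 ×ˢ Icc (0 : ℝ) 1) :=
    (hcont.pow 2).continuousOn.integrableOn_compact (isCompact_Icc.prod isCompact_Icc)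
  have hae := (integral_eq_zero_iff_of_nonneg (fun z => sq_nonneg (discrepancy μ z)) hint).mp h
  refine Measure.eqOn_of_ae_eq (hae.mono fun z hz => pow_eq_zero_iff two_ne_zero |>.mp hz)
    hcont.continuousOn continuousOn_const ?_
  rw [interior_prod_eq, closure_prod_eq, interior_Icc, closure_Ioo zero_ne_one]

lemma measureReal_Iio_prod_Iic (hμ : IsPermuton μ) {t u : ℝ} (ht : t ∈ Icc (0 : ℝ) 1)
    (hu : u ∈ Icc (0 : ℝ) 1) :
    μ.real (Iio t ×ˢ Iic u) = t * u + (discrepancy μ (t, u) - discrepancy μ (t, 0)) / 2 := by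
  have := hμ.1
  have hstrip : μ.real {p | p.1 < t} = t := by
    rw [show {p : ℝ × ℝ | p.1 < t} = Prod.fst ⁻¹' Iio t from rfl,
      hμ.measurePreserving_fst.measureReal_preimage measurableSet_Iio.nullMeasurableSet,
      ← restrict_Ico_eq_restrict_Icc,
      measureReal_restrict_apply measurableSet_Iio, inter_comm, Ico_inter_Iio, min_eq_right ht.2,
      Real.volume_real_Ico_of_le ht.1, sub_zero]
  have hsaw : ∀ v : ℝ, Integrable (fun p : ℝ × ℝ => saw v p.2) (μ.restrict {p | p.1 < t}) :=
    fun v => .of_bound (Measurable.aestronglyMeasurable (by fun_prop)) 1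
      (.of_forall fun _ => abs_saw_le_one _ _)
  have hmeas : MeasurableSet (Prod.snd ⁻¹' Iic u : Set (ℝ × ℝ)) := measurable_snd measurableSet_Iic
  have hind : Integrable ((Prod.snd ⁻¹' Iic u).indicator (1 : ℝ × ℝ → ℝ))
      (μ.restrict {p | p.1 < t}) := (integrable_const 1).indicator hmeas
  have hdiff : discrepancy μ (t, u) - discrepancy μ (t, 0) =
      2 * (μ.real (Iio t ×ˢ Iic u) - t * u) :=
    calc discrepancy μ (t, u) - discrepancy μ (t, 0)
        = ∫ p in {p | p.1 < t}, (saw u p.2 - saw 0 p.2) ∂μ := (integral_sub (hsaw u) (hsaw 0)).symm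
      _ = ∫ p in {p | p.1 < t}, 2 * ((Prod.snd ⁻¹' Iic u).indicator 1 p - u) ∂μ := by
        refine integral_congr_ae (ae_restrict_of_ae ?_)
        filter_upwards [hμ.ae_snd_mem_Ioo] with p hp
        exact saw_sub_saw_zero hu hp
      _ = 2 * (μ.real (Iio t ×ˢ Iic u) - t * u) := by
        rw [integral_const_mul, integral_sub hind (integrable_const u),
          integral_indicator_one hmeas, setIntegral_const, hstrip, smul_eq_mul,
          measureReal_restrict_apply hmeas, inter_comm]
        rfl
  linarith

theorem eq_uniformPermuton_of_discrepancy (hμ : IsPermuton μ)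
    (h : EqOn (discrepancy μ) 0 (Icc (0 : ℝ) 1 ×ˢ Icc (0 : ℝ) 1)) : μ = uniformPermuton := by
  refine hμ.ext_Iio_prod_Iic isPermuton_uniformPermuton fun t ht u hu => ?_
  have hzero : (0 : ℝ) ∈ Icc (0 : ℝ) 1 := left_mem_Icc.mpr zero_le_one
  rw [hμ.measureReal_Iio_prod_Iic ht hu, h ⟨ht, hu⟩, h ⟨ht, hzero⟩,
    isPermuton_uniformPermuton.measureReal_Iio_prod_Iic ht hu, discrepancy_uniformPermuton,
    discrepancy_uniformPermuton]
  rfl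

theorem sum_permutonDensity_interlace (hμ : IsPermuton μ) :
    ∑ π : Equiv.Perm (Fin 4) with Interlace (π 0) (π 1) (π 2) (π 3), PermutonDensity π μ =
      1 / 3 - 12 * ∫ z, discrepancy μ z ^ 2 ∂uniformPermuton - 6 * ∫ z, discrepancy μ z ^ 2 ∂μ := by
  linarith [hμ.mul_measureReal_rightmostInterlace, hμ.measureReal_rightmostInterlace_eq]

end IsPermuton
end Uniqueness

end

theorem statement_9 (μ : Measure (ℝ × ℝ)) (hμ : IsPermuton μ) :
    ∑ π ∈ ({
        mk4 0 2 1 3,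
        mk4 0 2 3 1,
        mk4 1 3 0 2,
        mk4 1 3 2 0,
        mk4 2 0 1 3,
        mk4 2 0 3 1,
        mk4 3 1 0 2,
        mk4 3 1 2 0} : Finset (Equiv.Perm (Fin 4))), PermutonDensity π μ ≤ (1 / 3 : ℝ) ∧
      (∑ π ∈ ({
        mk4 0 2 1 3,
        mk4 0 2 3 1,
        mk4 1 3 0 2,
        mk4 1 3 2 0,
        mk4 2 0 1 3,
        mk4 2 0 3 1,
        mk4 3 1 0 2,
        mk4 3 1 2 0} : Finset (Equiv.Perm (Fin 4))), PermutonDensity π μ = (1 / 3 : ℝ) ↔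
        μ = uniformPermuton) := by
  have hunif : 0 ≤ ∫ z, discrepancy μ z ^ 2 ∂uniformPermuton :=
    integral_nonneg fun _ => sq_nonneg _
  have hself : 0 ≤ ∫ z, discrepancy μ z ^ 2 ∂μ := integral_nonneg fun _ => sq_nonneg _
  rw [eq_filter_interlace, hμ.sum_permutonDensity_interlace]
  refine ⟨by linarith, fun h => hμ.eq_uniformPermuton_of_discrepancy <|
    hμ.discrepancy_eq_zero_of_integral_sq_eq_zero (by linarith), ?_⟩
  rintro rfl
  simp [discrepancy_uniformPermuton]
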